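/- Every formal meromorphic solution of the A_2^(1) system converges: if (c_n^i) is a formal meromorphic solution at t_0 of pole order 1, then each Laurent series f_i = Σ_{n ≥ −1} c_n^i (t − t_0)^n has positive radius of convergence, and the resulting functions form a genuine holomorphic solution of the A_2^(1) system on a punctured disk around t_0. -/

import Mathlib

/-!
The proof is the method of majorants. Writing `fᵢ = Pᵢ(T) / T` with `Pᵢ = ∑ dᵢₘ Tᵐ`,
`dᵢₘ = c i (m - 1)`, the system becomes `T Pᵢ' - Pᵢ = Pᵢ (Pᵢ₊₁ - Pᵢ₊₂) + αᵢ T²`, i.e. a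
recursion for `(m - 1) dᵢₘ` with a Cauchy product on the right (`shifted_rec`). Put
`eₙ = ∑ᵢ ‖c i n‖`. Taking norms gives `n eₙ ≤ K eₙ + ∑_{j < n} eⱼ eₙ₋₁₋ⱼ` for `n ≥ 2`, where `K`
comes from the residues. Once `n ≥ 2K` the term `K eₙ` is absorbed by the left side, and the
remaining factor `n` cancels the number of summands, so `eₙ` grows at most geometrically
(`geometric_bound`); no information on the values of the residues is needed. The power series `Pᵢ`
may then be differentiated termwise and multiplied, and the recursion gives the differential
equation. -/

open Metric

/-- A formal meromorphic solution of the `A₂⁽¹⁾` system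
`fᵢ' = fᵢ (fᵢ₊₁ − fᵢ₊₂) + αᵢ` (indices mod 3) at a point `t₀`, of pole order `r ≥ 1`. -/
def IsFormalMeromSolA2 (α : Fin 3 → ℂ) (r : ℤ) (c : Fin 3 → ℤ → ℂ) : Prop :=
  1 ≤ r ∧
  (∃ i : Fin 3, c i (-r) ≠ 0) ∧
  (∀ (i : Fin 3) (n : ℤ), n < -r → c i n = 0) ∧
  ∀ (i : Fin 3) (n : ℤ),
    (n : ℂ) * c i n =
      (∑ k ∈ Finset.Icc (-r) (n + r - 1),
        c i k * (c (i + 1) (n - k - 1) - c (i + 2) (n - k - 1))) +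
      (if n = 1 then α i else 0)

/-- The sum of the Laurent series with pole order 1 and coefficients `c i n`
centered at `t₀`. -/
noncomputable def laurentA2 (t0 : ℂ) (c : Fin 3 → ℤ → ℂ) (i : Fin 3) (s : ℂ) : ℂ :=
  c i (-1) / (s - t0) + ∑' n : ℕ, c i (n : ℤ) * (s - t0) ^ n

/-- A sequence with `n eₙ ≤ K eₙ + ∑_{j < n} eⱼ eₙ₋₁₋ⱼ` for `n ≥ 2` grows at most geometrically:
if `A ≥ 1` bounds the finitely many terms up to about `2K`, then `eₙ ≤ A (2A)ⁿ` for all `n`. -/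
lemma geometric_bound (e : ℕ → ℝ) (K : ℝ) (he : ∀ n, 0 ≤ e n)
    (hrec : ∀ n : ℕ, 2 ≤ n →
      (n : ℝ) * e n ≤ K * e n + ∑ j ∈ Finset.range n, e j * e (n - 1 - j)) :
    ∃ A ρ : ℝ, 0 < A ∧ 0 < ρ ∧ ∀ n, e n ≤ A * ρ ^ n := by
  obtain ⟨N, hN⟩ := exists_nat_ge (2 * K + 2)
  set A : ℝ := 1 + ∑ k ∈ Finset.range (N + 2), e k with hA
  have hA1 : 1 ≤ A := by
    have := Finset.sum_nonneg (fun k (_ : k ∈ Finset.range (N + 2)) => he k)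
    linarith
  refine ⟨A, 2 * A, by linarith, by linarith, fun n => ?_⟩
  induction n using Nat.strong_induction_on with
  | _ n ih =>
    by_cases hn : n < N + 2
    · have h1 : e n ≤ ∑ k ∈ Finset.range (N + 2), e k :=
        Finset.single_le_sum (fun k _ => he k) (Finset.mem_range.2 hn)
      have h2 : 1 ≤ (2 * A) ^ n := one_le_pow₀ (by linarith)
      nlinarith
    · push Not at hn
      have hnN : (N : ℝ) + 2 ≤ n := by exact_mod_cast hn
      have hn0 : (0 : ℝ) < n := by
        have : (0 : ℝ) ≤ N := Nat.cast_nonneg N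
        linarith
      have h1 := hrec n (by omega)
      have h2 : ∑ j ∈ Finset.range n, e j * e (n - 1 - j) ≤
          ∑ j ∈ Finset.range n, A * A * (2 * A) ^ (n - 1) := by
        refine Finset.sum_le_sum fun j hj => ?_
        have hj := Finset.mem_range.1 hj
        calc e j * e (n - 1 - j) ≤ (A * (2 * A) ^ j) * (A * (2 * A) ^ (n - 1 - j)) :=
              mul_le_mul (ih j hj) (ih _ (by omega)) (he _) (by positivity)
          _ = A * A * ((2 * A) ^ j * (2 * A) ^ (n - 1 - j)) := by ring
          _ = A * A * (2 * A) ^ (n - 1) := by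
              rw [← pow_add]; congr 2; omega
      rw [Finset.sum_const, Finset.card_range, nsmul_eq_mul] at h2
      have h3 : K * e n ≤ n / 2 * e n := mul_le_mul_of_nonneg_right (by linarith) (he n)
      have h4 : (n : ℝ) * e n ≤ n * (2 * (A * A * (2 * A) ^ (n - 1))) := by linarith
      have h5 := le_of_mul_le_mul_left h4 hn0
      calc e n ≤ 2 * (A * A * (2 * A) ^ (n - 1)) := h5
        _ = A * ((2 * A) ^ (n - 1) * (2 * A)) := by ring
        _ = A * (2 * A) ^ n := by rw [← pow_succ]; congr 2; omega

/-- The recursion for the coefficients `c i (m - 1)` of `T fᵢ`, with the convolution as a Cauchy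
product. -/
lemma shifted_rec {α : Fin 3 → ℂ} {c : Fin 3 → ℤ → ℂ} (h : IsFormalMeromSolA2 α 1 c)
    (i : Fin 3) (m : ℕ) :
    ((m : ℂ) - 1) * c i (m - 1) =
      (∑ j ∈ Finset.range (m + 1), c i (j - 1) *
        (c (i + 1) ((m - j : ℕ) - 1) - c (i + 2) ((m - j : ℕ) - 1))) +
      (if m = 2 then α i else 0) := by
  have h1 := h.2.2.2 i (m - 1)
  push_cast at h1
  rw [h1]
  congr 1
  · symm
    refine Finset.sum_bij (fun (j : ℕ) _ => (j : ℤ) - 1) ?_ ?_ ?_ ?_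
    · intro j hj
      simp only [Finset.mem_range, Finset.mem_Icc] at *
      omega
    · intro a _ b _ hab
      simpa using hab
    · intro k hk
      simp only [Finset.mem_Icc] at hk
      exact ⟨(k + 1).toNat, by simp only [Finset.mem_range]; omega, by omega⟩
    · intro j hj
      have hj := Finset.mem_range.1 hj
      have : ((m - j : ℕ) : ℤ) - 1 = (m : ℤ) - 1 - (j - 1) - 1 := by omega
      rw [this]
  · congr 1
    simp only [eq_iff_iff]
    omega

lemma coeff_bound {α : Fin 3 → ℂ} {c : Fin 3 → ℤ → ℂ} (h : IsFormalMeromSolA2 α 1 c) :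
    ∃ A ρ : ℝ, 0 < A ∧ 0 < ρ ∧ ∀ (i : Fin 3) (n : ℕ), ‖c i n‖ ≤ A * ρ ^ n := by
  set b : ℤ → ℝ := fun k => ∑ i, ‖c i k‖ with hb
  have hb0 : ∀ k, 0 ≤ b k := fun k => Finset.sum_nonneg fun i _ => norm_nonneg _
  -- summed over `i`, the quadratic terms are dominated by a product of norms
  have hprod : ∀ k l : ℤ, ∑ i, ‖c i k * (c (i + 1) l - c (i + 2) l)‖ ≤ b k * b l := by
    intro k l
    rw [hb, Finset.sum_mul]
    refine Finset.sum_le_sum fun i _ => ?_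
    rw [norm_mul]
    refine mul_le_mul_of_nonneg_left ?_ (norm_nonneg _)
    refine (norm_sub_le _ _).trans ?_
    have := norm_nonneg (c i l)
    change _ ≤ ∑ i, ‖c i l‖
    rw [Fin.sum_univ_three]
    fin_cases i
    · simp
    · have h2 : (1 + 1 : Fin 3) = 2 := rfl
      have h3 : (1 + 2 : Fin 3) = 0 := rfl
      simp only [Fin.mk_one, h2, h3] at *
      linarith
    · have h2 : (2 + 1 : Fin 3) = 0 := rfl
      have h3 : (2 + 2 : Fin 3) = 1 := rfl
      simp only [Fin.reduceFinMk, h2, h3] at *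
      linarith
  obtain ⟨A, ρ, hA, hρ, hle⟩ := geometric_bound (fun n : ℕ => b n) (2 * b (-1))
    (fun n => hb0 n) (by
      intro n hn
      have h1 : ∀ i, (n : ℂ) * c i n = ∑ j ∈ Finset.range (n + 2), c i (j - 1) *
          (c (i + 1) ((n + 1 - j : ℕ) - 1) - c (i + 2) ((n + 1 - j : ℕ) - 1)) := by
        intro i
        have := shifted_rec h i (n + 1)
        rw [if_neg (by omega)] at this
        simpa using this
      have h2 : (n : ℝ) * b n ≤ ∑ j ∈ Finset.range (n + 2),
          b (j - 1) * b ((n + 1 - j : ℕ) - 1) := by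
        calc (n : ℝ) * b n = ∑ i, ‖(n : ℂ) * c i n‖ := by
              simp [hb, Finset.mul_sum]
          _ ≤ ∑ i, ∑ j ∈ Finset.range (n + 2), ‖c i (j - 1) *
              (c (i + 1) ((n + 1 - j : ℕ) - 1) - c (i + 2) ((n + 1 - j : ℕ) - 1))‖ := by
              refine Finset.sum_le_sum fun i _ => ?_
              rw [h1 i]
              exact norm_sum_le _ _
          _ = ∑ j ∈ Finset.range (n + 2), ∑ i, ‖c i (j - 1) *
              (c (i + 1) ((n + 1 - j : ℕ) - 1) - c (i + 2) ((n + 1 - j : ℕ) - 1))‖ :=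
              Finset.sum_comm
          _ ≤ _ := Finset.sum_le_sum fun j _ => hprod _ _
      -- the two end terms carry the residues and give `2 b (-1) * b n`
      rw [Finset.sum_range_succ, Finset.sum_range_succ'] at h2
      have h3 : ∑ j ∈ Finset.range n, b (((j + 1 : ℕ) : ℤ) - 1) *
          b (((n + 1 - (j + 1) : ℕ) : ℤ) - 1) =
          ∑ j ∈ Finset.range n, b j * b ((n - 1 - j : ℕ) : ℤ) := by
        refine Finset.sum_congr rfl fun j hj => ?_
        have hj := Finset.mem_range.1 hj
        congr 2 <;> omega
      rw [h3] at h2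
      simp at h2
      linarith)
  refine ⟨A, ρ, hA, hρ, fun i n => le_trans ?_ (hle n)⟩
  exact Finset.single_le_sum (f := fun i => ‖c i n‖) (fun i _ => norm_nonneg _)
    (Finset.mem_univ i)

/-- Termwise differentiation of a power series with geometrically bounded coefficients, on a disk
of half the guaranteed radius. -/
lemma power_series_facts (d : ℕ → ℂ) (A ρ : ℝ) (hA : 0 < A) (hρ : 0 < ρ)
    (hd : ∀ n, ‖d n‖ ≤ A * ρ ^ n) (s : ℂ) (hs : ‖s‖ < 1 / (2 * ρ)) :
    Summable (fun n => ‖d n * s ^ n‖) ∧ Summable (fun n : ℕ => d n * (n * s ^ (n - 1))) ∧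
    HasDerivAt (fun z => ∑' n, d n * z ^ n) (∑' n : ℕ, d n * (n * s ^ (n - 1))) s := by
  have hr : ρ * (1 / (2 * ρ)) = 1 / 2 := by field_simp
  have hsum : Summable (fun n => ‖d n * s ^ n‖) := by
    refine Summable.of_nonneg_of_le (fun n => norm_nonneg _) (fun n => ?_)
      ((summable_geometric_of_lt_one (r := (1 / 2 : ℝ)) (by norm_num) (by norm_num)).mul_left A)
    calc ‖d n * s ^ n‖ = ‖d n‖ * ‖s‖ ^ n := by rw [norm_mul, norm_pow]
      _ ≤ (A * ρ ^ n) * (1 / (2 * ρ)) ^ n := by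
          gcongr
          exact hd n
      _ = A * (ρ * (1 / (2 * ρ))) ^ n := by rw [mul_pow]; ring
      _ = A * (1 / 2) ^ n := by rw [hr]
  have hu : Summable (fun n : ℕ => A * (2 * ρ) * (n * (1 / 2 : ℝ) ^ n)) := by
    refine Summable.mul_left _ ?_
    have := summable_pow_mul_geometric_of_norm_lt_one 1 (r := (1 / 2 : ℝ)) (by norm_num)
    simpa using this
  have hbd : ∀ (n : ℕ) (y : ℂ), y ∈ ball (0 : ℂ) (1 / (2 * ρ)) →
      ‖d n * (n * y ^ (n - 1))‖ ≤ A * (2 * ρ) * (n * (1 / 2 : ℝ) ^ n) := by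
    intro n y hy
    rw [mem_ball_zero_iff] at hy
    rcases n with _ | n
    · simp
    · rw [norm_mul, norm_mul, norm_pow, Complex.norm_natCast, Nat.add_sub_cancel]
      calc ‖d (n + 1)‖ * (((n + 1 : ℕ) : ℝ) * ‖y‖ ^ n)
          ≤ (A * ρ ^ (n + 1)) * (((n + 1 : ℕ) : ℝ) * (1 / (2 * ρ)) ^ n) := by
            gcongr
            exact hd _
        _ = A * ρ * ((n + 1 : ℕ) : ℝ) * (ρ * (1 / (2 * ρ))) ^ n := by rw [mul_pow]; ring
        _ = A * (2 * ρ) * (((n + 1 : ℕ) : ℝ) * (1 / 2 : ℝ) ^ (n + 1)) := by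
            rw [hr, pow_succ]; ring
  have hmem : s ∈ ball (0 : ℂ) (1 / (2 * ρ)) := by simpa using hs
  refine ⟨hsum, Summable.of_norm_bounded hu fun n => hbd n s hmem, ?_⟩
  exact hasDerivAt_tsum_of_isPreconnected hu isOpen_ball (convex_ball _ _).isPreconnected
    (fun n y _ => (hasDerivAt_pow n y).const_mul (d n)) hbd hmem hsum.of_norm hmem

/-- Every formal meromorphic solution of the `A₂⁽¹⁾` system converges: the
Laurent series have positive radius of convergence and the resulting functions
solve the system on a punctured disk around `t₀`. -/
theorem convergence_A2 (α : Fin 3 → ℂ) (t0 : ℂ) (c : Fin 3 → ℤ → ℂ)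
    (h : IsFormalMeromSolA2 α 1 c) :
    ∃ ε > (0 : ℝ),
      (∀ i : Fin 3, ∀ t ∈ ball t0 ε,
        Summable (fun n : ℕ => c i (n : ℤ) * (t - t0) ^ n)) ∧
      (∀ i : Fin 3, ∀ t ∈ ball t0 ε \ {t0},
        HasDerivAt (laurentA2 t0 c i)
          (laurentA2 t0 c i t *
            (laurentA2 t0 c (i + 1) t - laurentA2 t0 c (i + 2) t) + α i) t) := by
  obtain ⟨A, ρ, hA, hρ, hc⟩ := coeff_bound h
  set ε := 1 / (2 * ρ) with hε
  have hεpos : 0 < ε := by positivity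
  set d : Fin 3 → ℕ → ℂ := fun i m => c i ((m : ℤ) - 1) with hd
  have hd1 : ∀ i n, d i (n + 1) = c i n := fun i n => by simp [hd]
  -- the shift is absorbed in the constant: `B` also dominates the residues
  obtain ⟨B, hB, hdB⟩ : ∃ B : ℝ, 0 < B ∧ ∀ i n, ‖d i n‖ ≤ B * ρ ^ n := by
    have hS : 0 ≤ ∑ i, ‖c i (-1)‖ := Finset.sum_nonneg fun i _ => norm_nonneg _
    refine ⟨A / ρ + ∑ i, ‖c i (-1)‖, by positivity, fun i n => ?_⟩
    rcases n with _ | n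
    · have h1 : ‖c i (-1)‖ ≤ ∑ i, ‖c i (-1)‖ :=
        Finset.single_le_sum (f := fun i => ‖c i (-1)‖) (fun i _ => norm_nonneg _)
          (Finset.mem_univ i)
      have : 0 < A / ρ := by positivity
      simp only [hd, pow_zero, mul_one]
      simp
      linarith
    · rw [hd1]
      calc ‖c i n‖ ≤ A * ρ ^ n := hc i n
        _ = A / ρ * ρ ^ (n + 1) := by rw [pow_succ]; field_simp
        _ ≤ _ := by gcongr; linarith
  have hsummable : ∀ (i : Fin 3) (t : ℂ), t ∈ ball t0 ε →
      Summable (fun n : ℕ => c i (n : ℤ) * (t - t0) ^ n) := fun i t ht =>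
    (power_series_facts (fun n : ℕ => c i n) A ρ hA hρ (hc i) (t - t0)
      (mem_ball_iff_norm.1 ht)).1.of_norm
  refine ⟨ε, hεpos, hsummable, ?_⟩
  set P : Fin 3 → ℂ → ℂ := fun i z => ∑' n, d i n * z ^ n with hP
  have hL : ∀ i, ∀ s ∈ ball t0 ε \ {t0}, laurentA2 t0 c i s = P i (s - t0) / (s - t0) := by
    rintro i s ⟨hs, hs0⟩
    have hne : s - t0 ≠ 0 := sub_ne_zero.2 hs0
    have hsum := (power_series_facts (d i) B ρ hB hρ (hdB i) (s - t0)
      (mem_ball_iff_norm.1 hs)).1.of_norm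
    rw [laurentA2, hP]
    simp only
    rw [hsum.tsum_eq_zero_add, eq_div_iff hne, add_mul, div_mul_cancel₀ _ hne, ← tsum_mul_right]
    simp only [hd1, pow_succ, mul_assoc]
    simp [hd]
  rintro i t ⟨ht, ht0⟩
  have hne : t - t0 ≠ 0 := sub_ne_zero.2 ht0
  set s := t - t0 with hsdef
  have hs : ‖s‖ < 1 / (2 * ρ) := mem_ball_iff_norm.1 ht
  have F := fun j => power_series_facts (d j) B ρ hB hρ (hdB j) s hs
  set P' := ∑' n : ℕ, d i n * (n * s ^ (n - 1)) with hQ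
  -- the differential equation for `P i`, read off from the recursion
  have key : s * P' - P i s = P i s * (P (i + 1) s - P (i + 2) s) + α i * s ^ 2 := by
    have hG : P (i + 1) s - P (i + 2) s = ∑' n, (d (i + 1) n - d (i + 2) n) * s ^ n := by
      rw [hP]
      simp only
      rw [← (F _).1.of_norm.tsum_sub (F _).1.of_norm]
      simp only [sub_mul]
    have hGs : Summable (fun n => ‖(d (i + 1) n - d (i + 2) n) * s ^ n‖) := by
      refine Summable.of_nonneg_of_le (fun n => norm_nonneg _) (fun n => ?_)
        ((F (i + 1)).1.add (F (i + 2)).1)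
      rw [sub_mul]
      exact norm_sub_le _ _
    have hα : α i * s ^ 2 = ∑' n : ℕ, (if n = 2 then α i else 0) * s ^ n := by
      rw [tsum_eq_single 2 (fun n hn => by simp [hn])]
      simp
    have hαs : Summable (fun n : ℕ => (if n = 2 then α i else 0) * s ^ n) :=
      summable_of_ne_finset_zero (s := {2}) (fun n hn => by
        rw [Finset.mem_singleton] at hn
        simp [hn])
    rw [hG, hα, hP, hQ]
    simp only
    rw [tsum_mul_tsum_eq_tsum_sum_range_of_summable_norm (F i).1 hGs, ← tsum_mul_left,
      ← ((F i).2.1.mul_left s).tsum_sub (F i).1.of_norm,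
      ← (summable_norm_sum_mul_range_of_summable_norm (F i).1 hGs).of_norm.tsum_add hαs]
    refine tsum_congr fun m => ?_
    have hrec := shifted_rec h i m
    have h1 : s * (d i m * (m * s ^ (m - 1))) - d i m * s ^ m =
        (((m : ℂ) - 1) * d i m) * s ^ m := by
      rcases m with _ | m
      · simp
      · rw [Nat.add_sub_cancel, pow_succ]; ring
    rw [h1, hd]
    simp only
    rw [hrec, add_mul, Finset.sum_mul]
    congr 1
    refine Finset.sum_congr rfl fun j hj => ?_
    have hj : j + (m - j) = m := by
      have := Finset.mem_range.1 hj
      omega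
    calc _ = c i (j - 1) * (c (i + 1) ((m - j : ℕ) - 1) - c (i + 2) ((m - j : ℕ) - 1)) *
          s ^ (j + (m - j)) := by rw [hj]
      _ = _ := by rw [pow_add]; ring
  have hderP : HasDerivAt (fun z => P i (z - t0)) P' t := by
    have := (F i).2.2
    exact HasDerivAt.comp_sub_const t t0 this
  have hder := hderP.div ((hasDerivAt_id t).sub_const t0) hne
  have hopen : ball t0 ε \ {t0} ∈ nhds t :=
    (isOpen_ball.sdiff isClosed_singleton).mem_nhds ⟨ht, ht0⟩
  have hev : laurentA2 t0 c i =ᶠ[nhds t] fun z => P i (z - t0) / (z - t0) :=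
    Filter.eventually_of_mem hopen fun z hz => hL i z hz
  refine (hder.congr_of_eventuallyEq hev).congr_deriv ?_
  rw [hL i t ⟨ht, ht0⟩, hL (i + 1) t ⟨ht, ht0⟩, hL (i + 2) t ⟨ht, ht0⟩, ← hsdef]
  simp only [id, ← hsdef]
  field_simp
  linear_combination key
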